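/- Let L be a rational subset of F. Then there exists K ∈ ℕ such that for every integer s ≥ 1 and every u ∈ L with uπ ≥ 0 and uρ - uπ ≥ K, there exists v ∈ L satisfying vλ - vπ ≥ uλ - uπ, -s - K < vπ ≤ -s, and vρ = uρ. -/

import Mathlib

/-!
A triple `u` records a walk on `ℤ` from `0` to `u.p` with minimum `u.l` and maximum `u.r`. If
`u.r - u.p` is large, the walk makes a long descent after its last visit to the maximum. Inside
that descent a factor of negative displacement, bounded in terms of `L` only, can be iterated:
this leaves the maximum alone, lowers the endpoint in steps of a bounded size `d`, and does not
increase the depth `u.p - u.l` of the minimum below the endpoint.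

The property `HasPumping L K` makes this precise and is proved by induction on the rational
expression. In a product `u * v`, either `v` has a large drop `v.r - v.p`, or the maximum lies in
`u` and `u` has a large drop (`HasPumping.mul`). In a star, split a word just after a factor in
which the maximum is reached. Either that factor has a large drop, or the remaining word has
negative displacement and is handled by `pumpable_of_neg`: one of its factors has a large drop, or
a shortest prefix of negative displacement has bounded displacement and can itself be iterated.
-/

open Pointwise

/-- The monogenic free inverse monoid `F`, realized concretely as the monoid of triples
`u = (uλ, uπ, uρ) ∈ ℤ³` with `uλ ≤ 0 ≤ uρ` and `uλ ≤ uπ ≤ uρ`. -/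
@[ext]
structure F where
  l : ℤ
  p : ℤ
  r : ℤ
  hl : l ≤ 0
  hr : 0 ≤ r
  hlp : l ≤ p
  hpr : p ≤ r

namespace F

instance : Mul F where
  mul u v := ⟨min u.l (u.p + v.l), u.p + v.p, max u.r (u.p + v.r),
    by have h1 := u.hl; have h2 := v.hl; omega,
    by have h1 := u.hr; have h2 := v.hr; omega,
    by have h1 := u.hlp; have h2 := v.hlp; omega,
    by have h1 := u.hpr; have h2 := v.hpr; omega⟩

instance : One F where
  one := ⟨0, 0, 0, le_refl 0, le_refl 0, le_refl 0, le_refl 0⟩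

@[simp] theorem mul_l (u v : F) : (u * v).l = min u.l (u.p + v.l) := rfl
@[simp] theorem mul_p (u v : F) : (u * v).p = u.p + v.p := rfl
@[simp] theorem mul_r (u v : F) : (u * v).r = max u.r (u.p + v.r) := rfl
@[simp] theorem one_l : (1 : F).l = 0 := rfl
@[simp] theorem one_p : (1 : F).p = 0 := rfl
@[simp] theorem one_r : (1 : F).r = 0 := rfl

instance : Monoid F where
  mul_assoc u v w := by ext <;> simp <;> omega
  one_mul u := by have := u.hl; have := u.hr; ext <;> simp <;> omega
  mul_one u := by have := u.hlp; have := u.hpr; ext <;> simp <;> omega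

/-- The generator `a = (0,1,1)` of `F`. -/
def a : F := ⟨0, 1, 1, by omega, by omega, by omega, by omega⟩

/-- The inverse `a⁻¹ = (-1,-1,0)` of the generator. -/
def ainv : F := ⟨-1, -1, 0, by omega, by omega, by omega, by omega⟩

/-- Inversion in `F`: `u⁻¹ = (uλ - uπ, -uπ, uρ - uπ)`. -/
def inv (u : F) : F := ⟨u.l - u.p, -u.p, u.r - u.p,
  by have := u.hlp; omega, by have := u.hpr; omega,
  by have := u.hl; omega, by have := u.hr; omega⟩

/-- Rational subsets of `F`: the smallest family of subsets containing all finite subsets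
and closed under binary union, setwise product, and star. -/
inductive IsRat : Set F → Prop
  | finite : ∀ S : Set F, S.Finite → IsRat S
  | union : ∀ S T : Set F, IsRat S → IsRat T → IsRat (S ∪ T)
  | mul : ∀ S T : Set F, IsRat S → IsRat T → IsRat (S * T)
  | star : ∀ S : Set F, IsRat S → IsRat (⋃ k : ℕ, S ^ k)

/-- The canonical homomorphism `θ` from the free monoid on the two-letter alphabet
`{a, a⁻¹}` (encoded as `Bool`: `true ↦ a`, `false ↦ a⁻¹`) onto `F`. -/
def theta : FreeMonoid Bool →* F := FreeMonoid.lift fun b => bif b then a else ainv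

end F

namespace F

/-- `v` is obtained from `u` by lowering the endpoint by `e`, without raising the maximum and
without increasing the depth of the minimum below the endpoint. -/
def Lowers (u v : F) (e : ℤ) : Prop :=
  v.p = u.p - e ∧ v.r ≤ u.r ∧ u.l - u.p ≤ v.l - v.p

/-- The endpoint of `u` can be lowered inside `L` by every multiple of some `d` with
`1 ≤ d ≤ K`. -/
def Pumpable (L : Set F) (K : ℕ) (u : F) : Prop :=
  ∃ d : ℤ, 1 ≤ d ∧ d ≤ K ∧ ∀ n : ℕ, ∃ v ∈ L, Lowers u v (n * d)

/-- Every `u ∈ L` whose drop `u.r - u.p` is at least `K` can be lowered inside `L` by every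
multiple of some `d` with `1 ≤ d ≤ K`, with the maximum kept exactly. -/
def HasPumping (L : Set F) (K : ℕ) : Prop :=
  ∀ u ∈ L, (K : ℤ) ≤ u.r - u.p →
    ∃ d : ℤ, 1 ≤ d ∧ d ≤ K ∧ ∀ n : ℕ, ∃ v ∈ L, Lowers u v (n * d) ∧ v.r = u.r

theorem Lowers.mul_left {u v : F} {e : ℤ} (h : Lowers u v e) (he : 0 ≤ e) (x : F) :
    Lowers (x * u) (x * v) e := by
  obtain ⟨h1, h2, h3⟩ := h
  refine ⟨?_, ?_, ?_⟩ <;> simp only [mul_l, mul_p, mul_r] <;> omega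

theorem Lowers.mul_right {u v : F} {e : ℤ} (h : Lowers u v e) (he : 0 ≤ e) (x : F) :
    Lowers (u * x) (v * x) e := by
  obtain ⟨h1, h2, h3⟩ := h
  refine ⟨?_, ?_, ?_⟩ <;> simp only [mul_l, mul_p, mul_r] <;> omega

/-- Iterating a factor of negative displacement lowers it. -/
theorem lowers_pow {y : F} (hy : y.p < 0) (n : ℕ) : Lowers y (y ^ (n + 1)) (n * -y.p) := by
  induction n with
  | zero => simp [Lowers]
  | succ n ih =>
    obtain ⟨h1, h2, h3⟩ := ih
    have hl := y.hl
    rw [pow_succ' y (n + 1)]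
    have e : ((n + 1 : ℕ) : ℤ) * -y.p = n * -y.p + -y.p := by push_cast; ring
    have hn : 0 ≤ (n : ℤ) * -y.p := by nlinarith
    rw [e]
    refine ⟨?_, ?_, ?_⟩ <;> simp only [mul_l, mul_p, mul_r] <;> omega

theorem HasPumping.mono {L : Set F} {K K' : ℕ} (h : HasPumping L K) (hK : K ≤ K') :
    HasPumping L K' := by
  intro u hu hd
  obtain ⟨d, h1, h2, h3⟩ := h u hu (by omega)
  exact ⟨d, h1, by omega, h3⟩

theorem hasPumping_of_finite {S : Set F} (hS : S.Finite) : ∃ K, HasPumping S K := by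
  obtain ⟨B, hB⟩ := (hS.image fun u => (u.r - u.p).toNat).bddAbove
  refine ⟨B + 1, fun u hu hd => ?_⟩
  have : (u.r - u.p).toNat ≤ B := hB (Set.mem_image_of_mem _ hu)
  omega

theorem HasPumping.union {S T : Set F} {K K' : ℕ} (hS : HasPumping S K) (hT : HasPumping T K') :
    HasPumping (S ∪ T) (K + K') := by
  rintro u (hu | hu) hd
  · obtain ⟨d, h1, h2, h3⟩ := hS.mono (Nat.le_add_right K K') u hu hd
    exact ⟨d, h1, h2, fun n => (h3 n).imp fun v hv => ⟨Or.inl hv.1, hv.2⟩⟩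
  · obtain ⟨d, h1, h2, h3⟩ := hT.mono (Nat.le_add_left K' K) u hu hd
    exact ⟨d, h1, h2, fun n => (h3 n).imp fun v hv => ⟨Or.inr hv.1, hv.2⟩⟩

theorem HasPumping.mul {S T : Set F} {K K' : ℕ} (hS : HasPumping S K) (hT : HasPumping T K') :
    HasPumping (S * T) (K + K') := by
  rintro _ ⟨u, hu, v, hv, rfl⟩ hd
  simp only [mul_p, mul_r] at hd
  by_cases hvd : (K' : ℤ) ≤ v.r - v.p
  · obtain ⟨d, h1, h2, h3⟩ := hT v hv hvd
    refine ⟨d, h1, by omega, fun n => ?_⟩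
    obtain ⟨w, hw, hlow, hr⟩ := h3 n
    refine ⟨u * w, Set.mul_mem_mul hu hw, hlow.mul_left (by positivity) u, ?_⟩
    simp only [mul_r, hr]
  · have := v.hr
    obtain ⟨d, h1, h2, h3⟩ := hS u hu (by omega)
    refine ⟨d, h1, by omega, fun n => ?_⟩
    obtain ⟨w, hw, hlow, hr⟩ := h3 n
    have hn : 0 ≤ (n : ℤ) * d := by positivity
    refine ⟨w * v, Set.mul_mem_mul hw hv, hlow.mul_right hn v, ?_⟩
    -- The drop of `v` is small, so the maximum of `u * v` is that of `u`.
    have := hlow.1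
    simp only [mul_r, hr]
    omega

theorem iUnion_pow_eq_closure (S : Set F) :
    (⋃ k : ℕ, S ^ k) = (Submonoid.closure S : Set F) := by
  ext u
  simp only [Set.mem_iUnion, SetLike.mem_coe]
  constructor
  · rintro ⟨k, hk⟩
    induction k generalizing u with
    | zero =>
      rw [pow_zero, Set.mem_one] at hk
      exact hk ▸ one_mem _
    | succ k ih =>
      rw [pow_succ] at hk
      obtain ⟨w, hw, t, ht, rfl⟩ := hk
      exact mul_mem (ih w hw) (Submonoid.subset_closure ht)
  · intro hu
    induction hu using Submonoid.closure_induction_right with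
    | one => exact ⟨0, by simp⟩
    | mul_right w _ t ht ih =>
      obtain ⟨k, hk⟩ := ih
      exact ⟨k + 1, pow_succ S k ▸ Set.mul_mem_mul hk ht⟩

/-- A word of negative displacement in the star of `S` contains a factor to iterate. -/
theorem pumpable_of_neg {S : Set F} {K : ℕ} (hS : HasPumping S K) {w : F}
    (hw : w ∈ Submonoid.closure S) (hneg : w.p < 0) :
    Pumpable (Submonoid.closure S : Set F) K w := by
  induction hw using Submonoid.closure_induction_right with
  | one => simp at hneg
  | mul_right w hw t ht ih =>
    have htc := Submonoid.subset_closure ht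
    by_cases hwp : w.p < 0
    · obtain ⟨d, h1, h2, h3⟩ := ih hwp
      refine ⟨d, h1, h2, fun n => ?_⟩
      obtain ⟨v, hv, hlow⟩ := h3 n
      exact ⟨v * t, mul_mem hv htc, hlow.mul_right (by positivity) t⟩
    by_cases htd : (K : ℤ) ≤ t.r - t.p
    · obtain ⟨d, h1, h2, h3⟩ := hS t ht htd
      refine ⟨d, h1, h2, fun n => ?_⟩
      obtain ⟨v, hv, hlow, -⟩ := h3 n
      exact ⟨w * v, mul_mem hw (Submonoid.subset_closure hv), hlow.mul_left (by positivity) w⟩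
    -- Here `w.p ≥ 0` and `t.p > -K`, so the displacement of `w * t` lies in `(-K, 0)`.
    · have := t.hr
      refine ⟨-(w * t).p, by omega, by simp only [mul_p]; omega, fun n => ?_⟩
      exact ⟨(w * t) ^ (n + 1), pow_mem (mul_mem hw htc) _, lowers_pow hneg n⟩

/-- A word in the star of `S` splits right after a factor in which its maximum is reached
(or at the start, if no factor is needed to reach it). -/
theorem exists_split_at_max {S : Set F} {u : F} (hu : u ∈ Submonoid.closure S) :
    ∃ x ∈ Submonoid.closure S, ∃ y ∈ Submonoid.closure S, u = x * y ∧ x.r = u.r ∧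
      (x = 1 ∨ ∃ x' ∈ Submonoid.closure S, ∃ t ∈ S, x = x' * t ∧ u.r = x'.p + t.r) := by
  induction hu using Submonoid.closure_induction_right with
  | one => exact ⟨1, one_mem _, 1, one_mem _, by simp, rfl, Or.inl rfl⟩
  | mul_right w hw t ht ih =>
    have htc := Submonoid.subset_closure ht
    by_cases hmax : w.r ≤ w.p + t.r
    · refine ⟨w * t, mul_mem hw htc, 1, one_mem _, by simp, rfl, Or.inr ⟨w, hw, t, ht, rfl, ?_⟩⟩
      simp only [mul_r]
      omega
    · obtain ⟨x, hx, y, hy, rfl, hr, hx'⟩ := ih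
      have e : (x * y * t).r = (x * y).r := by
        rw [mul_r (x * y) t]
        omega
      exact ⟨x, hx, y * t, mul_mem hy htc, mul_assoc x y t, hr.trans e.symm, by rwa [e]⟩

theorem HasPumping.star {S : Set F} {K : ℕ} (hS : HasPumping S K) :
    HasPumping (⋃ k : ℕ, S ^ k) (K + 1) := by
  rw [iUnion_pow_eq_closure]
  intro u hu hd
  obtain ⟨x, hx, y, hy, rfl, hxr, hcase⟩ := exists_split_at_max hu
  -- When `y` descends, iterate inside `y`: the maximum is that of `x`, hence unchanged.
  have key : y.p < 0 → ∃ d : ℤ, 1 ≤ d ∧ d ≤ (K + 1 : ℕ) ∧ ∀ n : ℕ,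
      ∃ v ∈ (Submonoid.closure S : Set F), Lowers (x * y) v (n * d) ∧ v.r = (x * y).r := by
    intro hneg
    obtain ⟨d, h1, h2, h3⟩ := pumpable_of_neg hS hy hneg
    refine ⟨d, h1, by omega, fun n => ?_⟩
    obtain ⟨v, hv, hlow⟩ := h3 n
    refine ⟨x * v, mul_mem hx hv, hlow.mul_left (by positivity) x, ?_⟩
    have := hlow.2.1
    simp only [mul_r] at hxr ⊢
    omega
  rcases hcase with rfl | ⟨x', hx', t, ht, rfl, hmax⟩
  · rw [← hxr] at hd
    simp only [mul_p, one_r, one_p] at hd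
    exact key (by omega)
  by_cases htd : (K : ℤ) ≤ t.r - t.p
  · obtain ⟨d, h1, h2, h3⟩ := hS t ht htd
    refine ⟨d, h1, by omega, fun n => ?_⟩
    obtain ⟨v, hv, hlow, hr⟩ := h3 n
    have hn : 0 ≤ (n : ℤ) * d := by positivity
    refine ⟨x' * v * y, mul_mem (mul_mem hx' (Submonoid.subset_closure hv)) hy,
      (hlow.mul_left hn x').mul_right hn y, ?_⟩
    have := hlow.1
    simp only [mul_r, mul_p] at hmax ⊢
    omega
  · rw [hmax] at hd
    simp only [mul_p] at hd
    exact key (by omega)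

theorem IsRat.hasPumping {L : Set F} (hL : IsRat L) : ∃ K, HasPumping L K := by
  induction hL with
  | finite S hS => exact hasPumping_of_finite hS
  | union S T _ _ ihS ihT =>
    obtain ⟨K, hK⟩ := ihS
    obtain ⟨K', hK'⟩ := ihT
    exact ⟨_, hK.union hK'⟩
  | mul S T _ _ ihS ihT =>
    obtain ⟨K, hK⟩ := ihS
    obtain ⟨K', hK'⟩ := ihT
    exact ⟨_, hK.mul hK'⟩
  | star S _ ih =>
    obtain ⟨K, hK⟩ := ih
    exact ⟨_, hK.star⟩

end F

/-- Let `L` be a rational subset of `F`.  Then there is `K ∈ ℕ` such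
that for every integer `s ≥ 1` and every `u ∈ L` with `uπ ≥ 0` and `uρ - uπ ≥ K`, there
is `v ∈ L` with `vλ - vπ ≥ uλ - uπ`, `-s - K < vπ ≤ -s` and `vρ = uρ`. -/
theorem pumping_down (L : Set F) (hL : F.IsRat L) :
    ∃ K : ℕ, ∀ s : ℤ, 1 ≤ s → ∀ u ∈ L, 0 ≤ u.p → (K : ℤ) ≤ u.r - u.p →
      ∃ v ∈ L, u.l - u.p ≤ v.l - v.p ∧ -s - (K : ℤ) < v.p ∧ v.p ≤ -s ∧ v.r = u.r := by
  obtain ⟨K, hK⟩ := hL.hasPumping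
  refine ⟨K, fun s hs u hu hp hd => ?_⟩
  obtain ⟨d, h1, h2, h3⟩ := hK u hu hd
  -- `n` is `(u.p + s) / d` rounded up: the least number of steps of size `d` from `u.p` to
  -- some point at or below `-s`.
  obtain ⟨n, hn⟩ : ∃ n : ℕ, (n : ℤ) = (u.p + s + d - 1) / d :=
    ⟨_, Int.toNat_of_nonneg (Int.ediv_nonneg (by omega) (by omega))⟩
  have hdiv := Int.mul_ediv_add_emod (u.p + s + d - 1) d
  have hmod0 := Int.emod_nonneg (u.p + s + d - 1) (b := d) (by omega)
  have hmod1 := Int.emod_lt_of_pos (u.p + s + d - 1) (b := d) (by omega)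
  rw [← hn, mul_comm d] at hdiv
  obtain ⟨v, hv, ⟨hvp, -, hvl⟩, hvr⟩ := h3 n
  exact ⟨v, hv, hvl, by omega, by omega, hvr⟩
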